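/- Let Δ be a simplicial complex on [n] with Stanley-Reisner ideal I_Δ ⊆ R. Then I_Δ is ass-decomposable if and only if Δ is vertex decomposable. -/

import Mathlib

open MvPolynomial

namespace Paper

/-- An (abstract) simplicial complex: a nonempty, downward closed collection of
finite subsets of the vertex set. -/
def IsComplex {n : ℕ} (Δ : Set (Finset (Fin n))) : Prop :=
  Δ.Nonempty ∧ ∀ F ∈ Δ, ∀ G, G ⊆ F → G ∈ Δ

/-- The deletion `del_Δ(v)`. -/
def delC {n : ℕ} (Δ : Set (Finset (Fin n))) (v : Fin n) : Set (Finset (Fin n)) :=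
  {G ∈ Δ | v ∉ G}

/-- The link `link_Δ(v)`. -/
def linkC {n : ℕ} (Δ : Set (Finset (Fin n))) (v : Fin n) : Set (Finset (Fin n)) :=
  {G | G ∈ Δ ∧ v ∉ G ∧ insert v G ∈ Δ}

/-- A facet is a maximal face. -/
def IsFacet {n : ℕ} (Δ : Set (Finset (Fin n))) (F : Finset (Fin n)) : Prop :=
  F ∈ Δ ∧ ∀ G ∈ Δ, F ⊆ G → G = F

/-- A vertex `v` of `Δ` is a shedding vertex if every facet of `del_Δ(v)` is a facet
of `Δ`. -/
def IsSheddingVertex {n : ℕ} (Δ : Set (Finset (Fin n))) (v : Fin n) : Prop :=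
  {v} ∈ Δ ∧ ∀ F, IsFacet (delC Δ v) F → IsFacet Δ F

/-- `Δ` is a simplex: it has a unique maximal face containing all faces. -/
def IsSimplexC {n : ℕ} (Δ : Set (Finset (Fin n))) : Prop :=
  ∃ F ∈ Δ, ∀ G ∈ Δ, G ⊆ F

/-- Vertex decomposability, defined recursively. -/
inductive IsVertexDecomposable {n : ℕ} : Set (Finset (Fin n)) → Prop
  | simplex {Δ : Set (Finset (Fin n))} (h : IsComplex Δ) (hs : IsSimplexC Δ) :
      IsVertexDecomposable Δ
  | step {Δ : Set (Finset (Fin n))} (h : IsComplex Δ) (v : Fin n)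
      (hv : IsSheddingVertex Δ v)
      (h1 : IsVertexDecomposable (linkC Δ v)) (h2 : IsVertexDecomposable (delC Δ v)) :
      IsVertexDecomposable Δ

/-- The Stanley-Reisner ideal of `Δ`, generated by the squarefree monomials
`x_F = ∏_{i ∈ F} x_i` with `F ∉ Δ`. -/
noncomputable def SRIdeal (n : ℕ) (K : Type) [Field K] (Δ : Set (Finset (Fin n))) :
    Ideal (MvPolynomial (Fin n) K) :=
  Ideal.span {m | ∃ F : Finset (Fin n), F ∉ Δ ∧ m = ∏ i ∈ F, X i}

/-- `P_{F̄}`, the prime ideal generated by the variables `x_i` with `i ∉ F`. -/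
noncomputable def facePrime (n : ℕ) (K : Type) [Field K] (F : Finset (Fin n)) :
    Ideal (MvPolynomial (Fin n) K) :=
  Ideal.span ((fun i => (X i : MvPolynomial (Fin n) K)) '' {i | i ∉ F})

/-- A monomial ideal: an ideal generated by monomials. -/
def IsMonomialIdeal {n : ℕ} {K : Type} [Field K] (I : Ideal (MvPolynomial (Fin n) K)) : Prop :=
  ∃ S : Set (Fin n →₀ ℕ), I = Ideal.span ((fun a => monomial a (1 : K)) '' S)

/-- A squarefree monomial ideal: an ideal generated by squarefree monomials. -/
def IsSquarefreeMonomialIdeal {n : ℕ} {K : Type} [Field K]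
    (I : Ideal (MvPolynomial (Fin n) K)) : Prop :=
  ∃ S : Set (Fin n →₀ ℕ), (∀ a ∈ S, ∀ i, a i ≤ 1) ∧
    I = Ideal.span ((fun a => monomial a (1 : K)) '' S)

/-- An ideal `I` is unmixed if `dim A/I = dim A/𝔭` for every associated prime `𝔭` of `I`. -/
def IsUnmixed {A : Type} [CommRing A] (I : Ideal A) : Prop :=
  ∀ 𝔭 ∈ associatedPrimes A (A ⧸ I), ringKrullDim (A ⧸ I) = ringKrullDim (A ⧸ 𝔭)

/-- ass-decomposable ideals: `I` is ass-decomposable if it is primary, or there are a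
variable `x_i ∉ √I` and `k ≥ 1` with `ass(I + (x_i^k)) = {𝔭 ∈ ass(I) : x_i ∈ 𝔭}` such
that `I + (x_i^k)` and `I : x_i^k` are both ass-decomposable. -/
inductive IsAssDecomposable {n : ℕ} {K : Type} [Field K] :
    Ideal (MvPolynomial (Fin n) K) → Prop
  | primary {I : Ideal (MvPolynomial (Fin n) K)} (h : I.IsPrimary) : IsAssDecomposable I
  | step {I : Ideal (MvPolynomial (Fin n) K)} (i : Fin n) (k : ℕ) (hk : 1 ≤ k)
      (hx : X i ∉ I.radical)
      (hass : associatedPrimes (MvPolynomial (Fin n) K)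
          (MvPolynomial (Fin n) K ⧸ (I + Ideal.span {(X i : MvPolynomial (Fin n) K) ^ k})) =
        {𝔭 ∈ associatedPrimes (MvPolynomial (Fin n) K) (MvPolynomial (Fin n) K ⧸ I) |
          (X i : MvPolynomial (Fin n) K) ∈ 𝔭})
      (h1 : IsAssDecomposable (I + Ideal.span {(X i : MvPolynomial (Fin n) K) ^ k}))
      (h2 : IsAssDecomposable (I.colon (Ideal.span {(X i : MvPolynomial (Fin n) K) ^ k}))) :
      IsAssDecomposable I

section Aux

variable {n : ℕ} {K : Type} [Field K]

/-- Exponent vector of a squarefree monomial. -/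
noncomputable def ex (F : Finset (Fin n)) : Fin n →₀ ℕ := ∑ i ∈ F, Finsupp.single i 1

lemma ex_apply (F : Finset (Fin n)) (j : Fin n) : ex F j = if j ∈ F then 1 else 0 := by
  classical
  simp [ex, Finsupp.finsetSum_apply, Finsupp.single_apply]

lemma ex_support (F : Finset (Fin n)) : (ex F).support = F := by
  ext j; simp [ex_apply]

lemma prod_X_eq (F : Finset (Fin n)) :
    (∏ i ∈ F, X i : MvPolynomial (Fin n) K) = monomial (ex F) 1 := by
  simp [ex, monomial_sum_one, X]

lemma ex_le_iff (F : Finset (Fin n)) (m : Fin n →₀ ℕ) : ex F ≤ m ↔ F ⊆ m.support := by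
  constructor
  · intro h j hj
    have := h j
    rw [ex_apply, if_pos hj] at this
    simp; omega
  · intro h j
    rw [ex_apply]
    split_ifs with hj
    · have := h hj
      simp at this; omega
    · omega

lemma SRIdeal_eq (Δ : Set (Finset (Fin n))) :
    SRIdeal n K Δ = Ideal.span ((fun a => monomial a (1 : K)) '' (ex '' Δᶜ)) := by
  unfold SRIdeal
  congr 1
  ext m
  constructor
  · rintro ⟨F, hF, rfl⟩
    exact ⟨_, ⟨F, hF, rfl⟩, (prod_X_eq F).symm⟩
  · rintro ⟨_, ⟨F, hF, rfl⟩, rfl⟩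
    exact ⟨F, hF, (prod_X_eq F).symm⟩

lemma mem_SR {Δ : Set (Finset (Fin n))} (hΔ : IsComplex Δ) (f : MvPolynomial (Fin n) K) :
    f ∈ SRIdeal n K Δ ↔ ∀ m ∈ f.support, m.support ∉ Δ := by
  rw [SRIdeal_eq, mem_ideal_span_monomial_image]
  refine forall₂_congr fun m _ => ?_
  constructor
  · rintro ⟨_, ⟨F, hF, rfl⟩, h⟩ hm
    exact hF (hΔ.2 _ hm _ ((ex_le_iff _ _).1 h))
  · intro h
    exact ⟨_, ⟨_, h, rfl⟩, (ex_le_iff _ _).2 subset_rfl⟩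

lemma mem_SR_add {Δ : Set (Finset (Fin n))} (hΔ : IsComplex Δ) (i : Fin n) (k : ℕ)
    (f : MvPolynomial (Fin n) K) :
    f ∈ SRIdeal n K Δ + Ideal.span {(X i : MvPolynomial (Fin n) K) ^ k} ↔
      ∀ m ∈ f.support, m.support ∉ Δ ∨ k ≤ m i := by
  have : SRIdeal n K Δ + Ideal.span {(X i : MvPolynomial (Fin n) K) ^ k} =
      Ideal.span ((fun a => monomial a (1 : K)) '' (ex '' Δᶜ ∪ {Finsupp.single i k})) := by
    rw [Set.image_union, Ideal.span_union, SRIdeal_eq, Set.image_singleton, X_pow_eq_monomial]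
    rfl
  rw [this, mem_ideal_span_monomial_image]
  refine forall₂_congr fun m _ => ?_
  constructor
  · rintro ⟨_, ⟨F, hF, rfl⟩ | rfl, h⟩
    · exact Or.inl fun hm => hF (hΔ.2 _ hm _ ((ex_le_iff _ _).1 h))
    · right; simpa using h
  · rintro (h | h)
    · exact ⟨_, Or.inl ⟨_, h, rfl⟩, (ex_le_iff _ _).2 subset_rfl⟩
    · exact ⟨_, Or.inr rfl, by simpa using h⟩

lemma mem_face (F : Finset (Fin n)) (f : MvPolynomial (Fin n) K) :
    f ∈ facePrime n K F ↔ ∀ m ∈ f.support, ¬ m.support ⊆ F := by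
  unfold facePrime
  rw [mem_ideal_span_X_image]
  refine forall₂_congr fun m _ => ?_
  simp only [Finset.not_subset, Set.mem_setOf_eq, Finsupp.mem_support_iff]
  exact exists_congr fun i => and_comm

lemma face_prime (F : Finset (Fin n)) : (facePrime n K F).IsPrime := by
  classical
  let φ : MvPolynomial (Fin n) K →ₐ[K] MvPolynomial (Fin n) K :=
    aeval fun i => if i ∈ F then X i else 0
  have h1 : ((Ideal.Quotient.mkₐ K (facePrime n K F)).comp φ) =
      Ideal.Quotient.mkₐ K (facePrime n K F) := by
    apply MvPolynomial.algHom_ext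
    intro i
    by_cases hi : i ∈ F
    · simp [φ, hi]
    · simp only [φ, AlgHom.comp_apply, aeval_X, hi, if_false, map_zero]
      symm
      rw [Ideal.Quotient.mkₐ_eq_mk, Ideal.Quotient.eq_zero_iff_mem]
      exact Ideal.subset_span ⟨i, hi, rfl⟩
  have h2 : facePrime n K F = RingHom.ker φ := by
    apply le_antisymm
    · refine Ideal.span_le.2 ?_
      rintro _ ⟨i, hi, rfl⟩
      have hi' : i ∉ F := hi
      simp [φ, RingHom.mem_ker, hi']
    · intro f hf
      have := congrArg (fun g => g f) h1
      rw [RingHom.mem_ker] at hf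
      simp only [AlgHom.comp_apply, hf, map_zero] at this
      exact Ideal.Quotient.eq_zero_iff_mem.1 this.symm
  rw [h2]
  exact RingHom.ker_isPrime _

lemma mem_support_mul_monomial (f : MvPolynomial (Fin n) K) (a : Fin n →₀ ℕ)
    (P : (Fin n →₀ ℕ) → Prop) :
    (∀ m ∈ (f * monomial a (1 : K)).support, P m) ↔ ∀ m ∈ f.support, P (m + a) := by
  constructor
  · intro h m hm
    apply h
    rw [mem_support_iff] at *
    rwa [coeff_mul_monomial, mul_one]
  · intro h m hm
    rw [mem_support_iff, coeff_mul_monomial'] at hm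
    split_ifs at hm with hle
    · rw [mul_one] at hm
      have := h _ (mem_support_iff.2 hm)
      rwa [tsub_add_cancel_of_le hle] at this
    · exact absurd rfl hm

lemma ass_iff {A : Type} [CommRing A] [IsNoetherianRing A] (I p : Ideal A) :
    p ∈ associatedPrimes A (A ⧸ I) ↔ p.IsPrime ∧ ∃ g, ∀ f, f ∈ p ↔ f * g ∈ I := by
  rw [AssociatedPrimes.mem_iff, IsAssociatedPrime, Submodule.isAssociatedPrime_iff]
  refine and_congr_right fun _ => ?_
  constructor
  · rintro ⟨x, rfl⟩
    obtain ⟨g, rfl⟩ := Ideal.Quotient.mk_surjective x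
    refine ⟨g, fun f => ?_⟩
    rw [Submodule.mem_colon_singleton, Submodule.mem_bot, ← Ideal.Quotient.eq_zero_iff_mem]
    rfl
  · rintro ⟨g, hg⟩
    refine ⟨Ideal.Quotient.mk I g, ?_⟩
    ext f
    rw [hg, Submodule.mem_colon_singleton, Submodule.mem_bot, ← Ideal.Quotient.eq_zero_iff_mem]
    rfl

lemma exists_facet {Δ : Set (Finset (Fin n))} {F : Finset (Fin n)} (hF : F ∈ Δ) :
    ∃ G, F ⊆ G ∧ IsFacet Δ G := by
  obtain ⟨G, hG, hm⟩ := (Set.toFinite Δ).exists_le_maximal hF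
  exact ⟨G, hG, hm.1, fun H hH hle => le_antisymm (hm.2 hH hle) hle⟩

lemma mem_SR_iff_face {Δ : Set (Finset (Fin n))} (hΔ : IsComplex Δ)
    (f : MvPolynomial (Fin n) K) :
    f ∈ SRIdeal n K Δ ↔ ∀ F, IsFacet Δ F → f ∈ facePrime n K F := by
  simp only [mem_SR hΔ, mem_face]
  constructor
  · intro h F hF m hm hs
    exact h m hm (hΔ.2 _ hF.1 _ hs)
  · intro h m hm hs
    obtain ⟨G, hG, hf⟩ := exists_facet hs
    exact h G hf m hm hG

lemma face_inj {F G : Finset (Fin n)} (h : facePrime n K F = facePrime n K G) : F = G := by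
  have key : ∀ (F : Finset (Fin n)) i, (X i : MvPolynomial (Fin n) K) ∈ facePrime n K F ↔ i ∉ F := by
    intro F i
    rw [mem_face]
    simp [support_X, Finsupp.support_single_ne_zero]
  ext i
  have := key F i
  rw [h, key] at this
  tauto

lemma X_mem_face (F : Finset (Fin n)) (i : Fin n) :
    (X i : MvPolynomial (Fin n) K) ∈ facePrime n K F ↔ i ∉ F := by
  rw [mem_face]
  simp [support_X, Finsupp.support_single_ne_zero]

lemma supp_add (m a : Fin n →₀ ℕ) : (m + a).support = m.support ∪ a.support := by
  ext i
  simp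
  omega

lemma ass_SR {Δ : Set (Finset (Fin n))} (hΔ : IsComplex Δ) (p : Ideal (MvPolynomial (Fin n) K)) :
    p ∈ associatedPrimes (MvPolynomial (Fin n) K) (MvPolynomial (Fin n) K ⧸ SRIdeal n K Δ) ↔
      ∃ F, IsFacet Δ F ∧ p = facePrime n K F := by
  classical
  rw [ass_iff]
  constructor
  · rintro ⟨hp, g, hg⟩
    have h : (Finset.univ.filter fun F => IsFacet Δ F ∧ g ∉ facePrime n K F).inf
        (facePrime n K) ≤ p := by
      intro f hf
      rw [Submodule.mem_finsetInf] at hf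
      rw [hg, mem_SR_iff_face hΔ]
      intro F hF
      by_cases hgF : g ∈ facePrime n K F
      · exact Ideal.mul_mem_left _ _ hgF
      · exact Ideal.mul_mem_right _ _ (hf F (by simp [hF, hgF]))
    obtain ⟨F, hF, hle⟩ := hp.inf_le'.1 h
    simp only [Finset.mem_filter, Finset.mem_univ, true_and] at hF
    refine ⟨F, hF.1, le_antisymm ?_ hle⟩
    intro f hf
    exact ((face_prime F).mem_or_mem ((mem_SR_iff_face hΔ _).1 ((hg f).1 hf) F hF.1)).resolve_right
      hF.2
  · rintro ⟨F, hF, rfl⟩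
    refine ⟨face_prime F, monomial (ex F) 1, fun f => ?_⟩
    rw [mem_face, mem_SR hΔ, mem_support_mul_monomial]
    refine forall₂_congr fun m _ => not_congr ?_
    rw [supp_add, ex_support]
    constructor
    · intro h
      rw [Finset.union_eq_right.2 h]; exact hF.1
    · intro h
      have := hF.2 _ h Finset.subset_union_right
      exact Finset.union_eq_right.1 this

lemma isComplex_del {Δ : Set (Finset (Fin n))} (hΔ : IsComplex Δ) (v : Fin n) :
    IsComplex (delC Δ v) := by
  obtain ⟨⟨F, hF⟩, h⟩ := hΔ
  refine ⟨⟨∅, h F hF _ (by simp), by simp⟩, ?_⟩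
  rintro F ⟨hF, hv⟩ G hG
  exact ⟨h F hF G hG, fun h => hv (hG h)⟩

/-- The closed star of `v`. -/
def starC (Δ : Set (Finset (Fin n))) (v : Fin n) : Set (Finset (Fin n)) :=
  {G | insert v G ∈ Δ}

lemma isComplex_star {Δ : Set (Finset (Fin n))} (hΔ : IsComplex Δ) {v : Fin n} (hv : {v} ∈ Δ) :
    IsComplex (starC Δ v) := by
  refine ⟨⟨∅, by simpa [starC] using hv⟩, ?_⟩
  intro F hF G hG
  exact hΔ.2 _ hF _ (Finset.insert_subset_insert _ hG)

lemma SR_del {Δ : Set (Finset (Fin n))} (hΔ : IsComplex Δ) (v : Fin n) :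
    SRIdeal n K Δ + Ideal.span {(X v : MvPolynomial (Fin n) K) ^ 1} = SRIdeal n K (delC Δ v) := by
  ext f
  rw [mem_SR_add hΔ, mem_SR (isComplex_del hΔ v)]
  refine forall₂_congr fun m _ => ?_
  simp only [delC, Set.mem_setOf_eq, Finsupp.mem_support_iff, Nat.one_le_iff_ne_zero]
  tauto

lemma SR_colon {Δ : Set (Finset (Fin n))} (hΔ : IsComplex Δ) {v : Fin n} (hv : {v} ∈ Δ) :
    (SRIdeal n K Δ).colon (Ideal.span {(X v : MvPolynomial (Fin n) K) ^ 1}) =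
      SRIdeal n K (starC Δ v) := by
  ext f
  rw [Ideal.mem_colon_span_singleton, X_pow_eq_monomial, mem_SR hΔ, mem_SR (isComplex_star hΔ hv),
    mem_support_mul_monomial]
  refine forall₂_congr fun m _ => ?_
  rw [supp_add, Finsupp.support_single_ne_zero _ one_ne_zero, Finset.union_comm]
  rfl

lemma X_pow_mem {Δ : Set (Finset (Fin n))} (hΔ : IsComplex Δ) (v : Fin n) :
    (X v : MvPolynomial (Fin n) K) ∈ (SRIdeal n K Δ).radical ↔ {v} ∉ Δ := by
  constructor
  · rintro ⟨k, hk⟩ hv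
    rw [X_pow_eq_monomial, mem_SR hΔ] at hk
    refine hk (Finsupp.single v k) (by simp) (hΔ.2 _ hv _ Finsupp.support_single_subset)
  · intro h
    apply Ideal.le_radical
    rw [mem_SR hΔ]
    simpa [support_X, Finsupp.support_single_ne_zero] using h

lemma ass_pow {Δ : Set (Finset (Fin n))} (hΔ : IsComplex Δ) {v : Fin n} {k : ℕ} (hk : 2 ≤ k)
    {F : Finset (Fin n)} (hF : IsFacet (linkC Δ v) F) :
    facePrime n K F ∈ associatedPrimes (MvPolynomial (Fin n) K)
      (MvPolynomial (Fin n) K ⧸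
        (SRIdeal n K Δ + Ideal.span {(X v : MvPolynomial (Fin n) K) ^ k})) := by
  rw [ass_iff]
  refine ⟨face_prime F, monomial (ex F + Finsupp.single v (k - 1)) 1, fun f => ?_⟩
  obtain ⟨⟨h1, h2, h3⟩, h4⟩ := hF
  rw [mem_face, mem_SR_add hΔ, mem_support_mul_monomial]
  refine forall₂_congr fun m _ => ?_
  rw [supp_add, supp_add, ex_support, Finsupp.support_single_ne_zero _ (by omega)]
  simp only [Finsupp.add_apply, ex_apply, if_neg h2, Finsupp.single_eq_same]
  constructor
  · intro h
    by_cases hv : v ∈ m.support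
    · right
      rw [Finsupp.mem_support_iff] at hv
      omega
    · left
      intro hm
      apply h
      refine Finset.union_eq_right.1 (h4 (m.support ∪ F) ⟨?_, ?_, ?_⟩ Finset.subset_union_right)
      · refine hΔ.2 _ hm _ ?_
        rw [← Finset.union_assoc]; exact Finset.subset_union_left
      · simp only [Finset.mem_union, not_or]; exact ⟨hv, h2⟩
      · refine hΔ.2 _ hm _ ?_
        intro x; simp only [Finset.mem_insert, Finset.mem_union, Finset.mem_singleton]; tauto
  · rintro (h | h) hs
    · refine h (hΔ.2 _ h3 _ ?_)
      intro x; simp only [Finset.mem_insert, Finset.mem_union, Finset.mem_singleton]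
      have := @hs x
      tauto
    · have : v ∈ m.support := by rw [Finsupp.mem_support_iff]; omega
      exact h2 (hs this)

/-- Deleting the apex of a cone preserves vertex decomposability. -/
lemma vd_del_cone {Γ : Set (Finset (Fin n))} (h : IsVertexDecomposable Γ) (v : Fin n)
    (hc : ∀ G ∈ Γ, insert v G ∈ Γ) : IsVertexDecomposable (delC Γ v) := by
  induction h with
  | simplex h hs =>
    refine .simplex (isComplex_del h v) ?_
    obtain ⟨F, hF, hall⟩ := hs
    refine ⟨F.erase v, ⟨h.2 _ hF _ (Finset.erase_subset _ _), by simp⟩, ?_⟩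
    rintro G ⟨hG, hv⟩
    exact Finset.subset_erase.2 ⟨hall G hG, hv⟩
  | @step Γ h w hw h1 h2 ih1 ih2 =>
    by_cases hwv : w = v
    · subst hwv; exact h2
    have e1 : linkC (delC Γ v) w = delC (linkC Γ w) v := by
      ext G
      simp only [linkC, delC, Set.mem_setOf_eq, Finset.mem_insert]
      have : v ≠ w := fun h => hwv h.symm
      tauto
    have e2 : delC (delC Γ v) w = delC (delC Γ w) v := by
      ext G
      simp only [delC, Set.mem_setOf_eq]
      tauto
    refine .step (isComplex_del h v) w ⟨⟨hw.1, by simpa using fun h => hwv h.symm⟩, ?_⟩ ?_ ?_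
    · rintro F ⟨⟨⟨hF, hvF⟩, hwF⟩, hmax⟩
      have hf : IsFacet (delC Γ w) (insert v F) := by
        refine ⟨⟨hc F hF, by simp [hwv, hwF]⟩, ?_⟩
        rintro G ⟨hG, hwG⟩ hle
        have hvG : v ∈ G := hle (by simp)
        have := hmax (G.erase v) ⟨⟨h.2 _ hG _ (Finset.erase_subset _ _), by simp⟩, by simp [hwG]⟩
          (Finset.subset_erase.2 ⟨(Finset.subset_insert _ _).trans hle, hvF⟩)
        rw [← this, Finset.insert_erase hvG]
      have hf' := hw.2 _ hf
      refine ⟨⟨hF, hvF⟩, ?_⟩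
      rintro G ⟨hG, hvG⟩ hle
      have := hf'.2 _ (hc G hG) (Finset.insert_subset_insert _ hle)
      rw [← Finset.erase_insert hvG, this, Finset.erase_insert hvF]
    · rw [e1]
      apply ih1
      rintro G ⟨hG, hwG, hi⟩
      refine ⟨hc G hG, by simp [hwG, hwv], ?_⟩
      rw [Finset.insert_comm]; exact hc _ hi
    · rw [e2]
      apply ih2
      rintro G ⟨hG, hwG⟩
      exact ⟨hc G hG, by simp [hwG, hwv]⟩

lemma forward {J : Ideal (MvPolynomial (Fin n) K)} (hJ : IsAssDecomposable J) :
    ∀ Δ : Set (Finset (Fin n)), IsComplex Δ → J = SRIdeal n K Δ → IsVertexDecomposable Δ := by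
  classical
  induction hJ with
  | primary h =>
    rintro Δ hΔ rfl
    refine .simplex hΔ ⟨Finset.univ.filter fun v => {v} ∈ Δ, ?_, ?_⟩
    · by_contra hF
      have hm : (∏ i ∈ Finset.univ.filter fun v => {v} ∈ Δ, X i : MvPolynomial (Fin n) K) ∈
        (SRIdeal n K Δ).radical := Ideal.le_radical (Ideal.subset_span ⟨_, hF, rfl⟩)
      have := Ideal.isPrime_radical h
      obtain ⟨i, hi, hi'⟩ := (Ideal.IsPrime.prod_mem_iff (hp := this)).1 hm
      rw [X_pow_mem hΔ] at hi'
      simp at hi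
      exact hi' hi
    · intro G hG v hv
      simp only [Finset.mem_filter, Finset.mem_univ, true_and]
      exact hΔ.2 _ hG _ (by simpa using hv)
  | step i k hk hx hass h1 h2 ih1 ih2 =>
    rintro Δ hΔ rfl
    rw [X_pow_mem hΔ, not_not] at hx
    obtain rfl | hk2 : k = 1 ∨ 2 ≤ k := by omega
    · have hd := ih1 _ (isComplex_del hΔ i) (SR_del hΔ i)
      have hs := ih2 _ (isComplex_star hΔ hx) (SR_colon hΔ hx)
      refine .step hΔ i ⟨hx, ?_⟩ ?_ hd
      · intro F hF
        have hm : facePrime n K F ∈ associatedPrimes (MvPolynomial (Fin n) K)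
          (MvPolynomial (Fin n) K ⧸ SRIdeal n K (delC Δ i)) :=
            (ass_SR (isComplex_del hΔ i) _).2 ⟨F, hF, rfl⟩
        rw [← SR_del hΔ, hass] at hm
        obtain ⟨G, hG, he⟩ := (ass_SR hΔ _).1 hm.1
        rw [face_inj he]; exact hG
      · have := vd_del_cone hs i (fun G hG => by simpa [starC] using hG)
        convert this using 1
        ext G
        simp only [linkC, delC, starC, Set.mem_setOf_eq]
        constructor
        · tauto
        · rintro ⟨h, h'⟩
          exact ⟨hΔ.2 _ h _ (Finset.subset_insert _ _), h', h⟩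
    · exfalso
      have he : (∅ : Finset (Fin n)) ∈ linkC Δ i :=
        ⟨hΔ.2 _ hx _ (by simp), by simp, by simpa using hx⟩
      obtain ⟨F, -, hF⟩ := exists_facet he
      have hm := ass_pow (K := K) hΔ hk2 hF
      rw [hass] at hm
      obtain ⟨G, hG, he⟩ := (ass_SR hΔ _).1 hm.1
      rw [← face_inj he] at hG
      have := hG.2 _ hF.1.2.2 (Finset.subset_insert _ _)
      apply hF.1.2.1
      rw [← this]; simp

lemma sdiff_subset_iff' {F A G : Finset (Fin n)} : F \ A ⊆ G ↔ F ⊆ A ∪ G :=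
  sdiff_le_iff

/-- The join of `Δ` with the simplex on `A`. -/
def coneC (A : Finset (Fin n)) (Δ : Set (Finset (Fin n))) : Set (Finset (Fin n)) :=
  {G | G \ A ∈ Δ}

lemma isComplex_cone {Δ : Set (Finset (Fin n))} (hΔ : IsComplex Δ) (A : Finset (Fin n)) :
    IsComplex (coneC A Δ) := by
  obtain ⟨⟨F, hF⟩, h⟩ := hΔ
  refine ⟨⟨∅, h F hF _ (by simp)⟩, ?_⟩
  intro F hF G hG
  exact h _ hF _ (Finset.sdiff_subset_sdiff hG subset_rfl)

lemma ass_of_simplex {Δ : Set (Finset (Fin n))} (hΔ : IsComplex Δ) (hs : IsSimplexC Δ) :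
    (SRIdeal n K Δ).IsPrimary := by
  obtain ⟨F, hF, hall⟩ := hs
  have : SRIdeal n K Δ = facePrime n K F := by
    ext f
    rw [mem_SR hΔ, mem_face]
    exact forall₂_congr fun m _ => not_congr ⟨hall _, hΔ.2 _ hF _⟩
  rw [this]
  exact (face_prime F).isPrimary

lemma backward {Δ : Set (Finset (Fin n))} (h : IsVertexDecomposable Δ) :
    ∀ A : Finset (Fin n), (∀ F ∈ Δ, Disjoint F A) →
      IsAssDecomposable (SRIdeal n K (coneC A Δ)) := by
  induction h with
  | @simplex Δ h hs =>
    intro A hA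
    refine .primary (ass_of_simplex (isComplex_cone h A) ?_)
    obtain ⟨F, hF, hall⟩ := hs
    refine ⟨F ∪ A, ?_, ?_⟩
    · exact h.2 _ hF _ (by simp [sdiff_subset_iff', Finset.union_comm])
    · intro G hG
      have := hall _ hG
      rw [sdiff_subset_iff'] at this
      rwa [Finset.union_comm]
  | @step Δ h v hv h1 h2 ih1 ih2 =>
    intro A hA
    have hc := isComplex_cone h A
    have hvA : v ∉ A := by simpa using hA _ hv.1
    have hvc : {v} ∈ coneC A Δ := by
      have : ({v} : Finset (Fin n)) \ A = {v} := by
        rw [Finset.sdiff_eq_self_iff_disjoint]; exact hA _ hv.1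
      simpa [coneC, this] using hv.1
    have ed : delC (coneC A Δ) v = coneC A (delC Δ v) := by
      ext G
      simp [delC, coneC, hvA]
    have es : starC (coneC A Δ) v = coneC (insert v A) (linkC Δ v) := by
      ext G
      have e : insert v (G \ insert v A) = insert v G \ A := by
        ext x
        simp only [Finset.mem_insert, Finset.mem_sdiff]
        by_cases hx : x = v
        · subst hx; simp [hvA]
        · simp [hx]
      simp only [starC, coneC, linkC, Set.mem_setOf_eq, e]
      constructor
      · intro hG
        refine ⟨?_, by simp, hG⟩
        rw [← e] at hG
        exact h.2 _ hG _ (Finset.subset_insert _ _)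
      · tauto
    refine .step v 1 le_rfl ?_ ?_ ?_ ?_
    · rw [X_pow_mem hc, not_not]; exact hvc
    · rw [SR_del hc]
      ext p
      rw [ass_SR (isComplex_del hc v), Set.mem_setOf_eq, ass_SR hc]
      constructor
      · rintro ⟨H, ⟨⟨hH, hvH⟩, hmax⟩, rfl⟩
        refine ⟨⟨H, ?_, rfl⟩, (X_mem_face _ _).2 hvH⟩
        have hAH : A ⊆ H := by
          have := hmax (H ∪ A) ⟨?_, by simp [hvH, hvA]⟩ Finset.subset_union_left
          · exact Finset.union_eq_left.1 this
          · simpa [coneC, Finset.union_sdiff_right] using hH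
        have hf : IsFacet (delC Δ v) (H \ A) := by
          refine ⟨⟨hH, by simp [hvH]⟩, ?_⟩
          rintro G ⟨hG, hvG⟩ hle
          have hd := hA G hG
          have hGA : (G ∪ A) \ A = G := by
            rw [Finset.union_sdiff_right, Finset.sdiff_eq_self_iff_disjoint]; exact hd
          have := hmax (G ∪ A) ⟨by simpa [coneC, hGA] using hG, by simp [hvG, hvA]⟩ (by
            rw [sdiff_subset_iff'] at hle
            rwa [Finset.union_comm])
          rw [← this, hGA]
        have hf' := hv.2 _ hf
        refine ⟨hH, fun G hG hle => ?_⟩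
        have := hf'.2 _ hG (Finset.sdiff_subset_sdiff hle subset_rfl)
        rw [← Finset.sdiff_union_of_subset (hAH.trans hle), this,
          Finset.sdiff_union_of_subset hAH]
      · rintro ⟨⟨F, hF, rfl⟩, hx⟩
        rw [X_mem_face] at hx
        exact ⟨F, ⟨⟨hF.1, hx⟩, fun G hG => hF.2 G hG.1⟩, rfl⟩
    · rw [SR_del hc, ed]
      exact ih2 A fun F hF => hA F hF.1
    · rw [SR_colon hc hvc, es]
      apply ih1
      rintro F ⟨hF, hvF, -⟩
      rw [Finset.disjoint_insert_right]
      exact ⟨hvF, hA F hF⟩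

end Aux

/-- For a simplicial complex `Δ` on `[n]`, the Stanley-Reisner ideal `I_Δ` is
ass-decomposable if and only if `Δ` is vertex decomposable. -/
theorem statement_7 (n : ℕ) (K : Type) [Field K] (Δ : Set (Finset (Fin n)))
    (hΔ : IsComplex Δ) (hvert : ∀ u : Fin n, {u} ∈ Δ) :
    IsAssDecomposable (SRIdeal n K Δ) ↔ IsVertexDecomposable Δ := by
  refine ⟨fun h => forward h Δ hΔ rfl, fun h => ?_⟩
  have := backward (K := K) h ∅ (fun F _ => Finset.disjoint_empty_right F)
  have e : coneC ∅ Δ = Δ := by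
    ext G; simp [coneC]
  rwa [e] at this

end Paper
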